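/- (Infinite acyclic graphs) Let G be a (possibly infinite) acyclic graph on vertex set V and {A_v}_{v∈V} ⊆ B(H) contractions commuting according to G. Then there exists a Hilbert space K ⊇ H and co-isometries {X_v}_{v∈V} ⊆ B(K) commuting according to G such that X_v extends A_v for each v. -/

import Mathlib

open ContinuousLinearMap

/-- Data witnessing the conclusion of the infinite version of Lemma 2.2: a Hilbert
space `K ⊇ H` and co-isometries `{X_v}_{v ∈ V}` on `K` commuting according to the
graph `G` such that `X_v` extends `A_v` for each vertex `v`. -/
structure GraphCoisometricExtension {V : Type} {H : Type}
    [NormedAddCommGroup H] [InnerProductSpace ℂ H] [CompleteSpace H]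
    (G : SimpleGraph V) (A : V → H →L[ℂ] H) where
  K : Type
  [grp : NormedAddCommGroup K]
  [ips : InnerProductSpace ℂ K]
  [cpl : CompleteSpace K]
  emb : H →ₗᵢ[ℂ] K
  X : V → K →L[ℂ] K
  coisometry : ∀ v, X v ∘L ContinuousLinearMap.adjoint (X v) = 1
  commute : ∀ u v, G.Adj u v → X u ∘L X v = X v ∘L X u
  extend : ∀ (v) (x : H), X v (emb x) = emb (A v x)

/-!
It suffices to find commuting isometries whose adjoints extend the `A v`. If the adjoint of an
isometry `V` extends the same operator on two copies of `H`, embedded by `j₁` and `j₂` with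
`j₁ - j₂` orthogonal to `j₁ + j₂`, then the reflection in the orthogonal complement of the
`V`-cyclic subspace of `j₁ - j₂` exchanges the two copies and commutes with `V`. Hence entries of
a diagonal isometry of `ℓ²` whose adjoints extend the same operator can be permuted by a unitary
that fixes `H`. Exchanging `V₁ V₂` with `V₂ V₁` yields Ando's theorem. In the presence of
infinitely many copies of every isometry of the space, any two isometries whose adjoints extend
the same operator become unitarily equivalent over `H`, so a choice made at one vertex can be
matched by a commuting choice at any neighbour, and in a forest such choices spread
consistently from one root per component.
-/

section AdjointExtends

variable {𝕜 H K : Type*} [RCLike 𝕜] [NormedAddCommGroup K] [InnerProductSpace 𝕜 K]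

/-- The adjoint of the isometry `V` extends `A`, where `j` places the domain of `A` inside `K`.
Stated without the adjoint, so that `j` and `A` may be arbitrary functions. -/
def AdjointExtends (j : H → K) (A : H → H) (V : K →ₗᵢ[𝕜] K) : Prop :=
  ∀ x h, inner 𝕜 (V x) (j h) = inner 𝕜 x (j (A h))

theorem AdjointExtends.adjoint_apply [CompleteSpace K] {j : H → K} {A : H → H} {V : K →ₗᵢ[𝕜] K}
    (hV : AdjointExtends j A V) (h : H) : adjoint V.toContinuousLinearMap (j h) = j (A h) :=
  ext_inner_left 𝕜 fun x => by rw [adjoint_inner_right]; exact hV x h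

theorem AdjointExtends.comp {j : H → K} {A₁ A₂ : H → H} {V₁ V₂ : K →ₗᵢ[𝕜] K}
    (h₁ : AdjointExtends j A₁ V₁) (h₂ : AdjointExtends j A₂ V₂) :
    AdjointExtends j (A₂ ∘ A₁) (V₁.comp V₂) :=
  fun x h => (h₁ (V₂ x) h).trans (h₂ x (A₁ h))

theorem AdjointExtends.sub {j₁ j₂ : H → K} {A : H → H} {V : K →ₗᵢ[𝕜] K}
    (h₁ : AdjointExtends j₁ A V) (h₂ : AdjointExtends j₂ A V) :
    AdjointExtends (j₁ - j₂) A V := fun x h => by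
  simp only [Pi.sub_apply, inner_sub_right, h₁ x h, h₂ x h]

theorem AdjointExtends.add {j₁ j₂ : H → K} {A : H → H} {V : K →ₗᵢ[𝕜] K}
    (h₁ : AdjointExtends j₁ A V) (h₂ : AdjointExtends j₂ A V) :
    AdjointExtends (j₁ + j₂) A V := fun x h => by
  simp only [Pi.add_apply, inner_add_right, h₁ x h, h₂ x h]

theorem AdjointExtends.inner_iterate {j : H → K} {A : H → H} {V : K →ₗᵢ[𝕜] K}
    (hV : AdjointExtends j A V) (n : ℕ) (x : K) (h : H) :
    inner 𝕜 (V^[n] x) (j h) = inner 𝕜 x (j (A^[n] h)) := by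
  induction n generalizing h with
  | zero => rfl
  | succ n ih => rw [Function.iterate_succ_apply', hV, ih, Function.iterate_succ_apply]

end AdjointExtends

section CyclicSubspace

variable {𝕜 H K : Type*} [RCLike 𝕜] [NormedAddCommGroup K] [InnerProductSpace 𝕜 K]

theorem reflection_semiconj (F : Submodule 𝕜 K) [F.HasOrthogonalProjection] (V : K →ₗ[𝕜] K)
    (hF : F ∈ Module.End.invtSubmodule V) (hF' : Fᗮ ∈ Module.End.invtSubmodule V) :
    Function.Semiconj F.reflection V V := by
  intro x
  obtain ⟨y, hy, z, hz, rfl⟩ := F.exists_add_mem_mem_orthogonal x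
  simp only [map_add, F.reflection_mem_subspace_eq_self hy,
    F.reflection_mem_subspace_orthogonalComplement_eq_neg hz,
    F.reflection_mem_subspace_eq_self (hF hy),
    F.reflection_mem_subspace_orthogonalComplement_eq_neg (hF' hz), map_neg]

/-- The smallest `V`-invariant subspace of `K` containing the range of `j` (not closed). -/
def cyclicSubspace (j : H → K) (V : K →ₗᵢ[𝕜] K) : Submodule 𝕜 K :=
  Submodule.span 𝕜 {x | ∃ n h, V^[n] (j h) = x}

theorem mem_cyclicSubspace (j : H → K) (V : K →ₗᵢ[𝕜] K) (n : ℕ) (h : H) :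
    V^[n] (j h) ∈ cyclicSubspace j V :=
  Submodule.subset_span ⟨n, h, rfl⟩

theorem cyclicSubspace_mem_invtSubmodule (j : H → K) (V : K →ₗᵢ[𝕜] K) :
    cyclicSubspace j V ∈ Module.End.invtSubmodule V.toLinearMap := by
  refine Submodule.span_le.2 ?_
  rintro _ ⟨n, h, rfl⟩
  have := mem_cyclicSubspace j V (n + 1) h
  rwa [Function.iterate_succ_apply'] at this

theorem AdjointExtends.mem_orthogonal_cyclicSubspace {H' : Type*} {j : H → K} {j' : H' → K}
    {A : H → H} {V : K →ₗᵢ[𝕜] K} (hV : AdjointExtends j A V)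
    (horth : ∀ h' h, inner 𝕜 (j' h') (j h) = 0) (h : H) : j h ∈ (cyclicSubspace j' V)ᗮ := by
  refine (Submodule.mem_orthogonal _ _).2 fun x hx => ?_
  induction hx using Submodule.span_induction with
  | mem x hx =>
    obtain ⟨n, h', rfl⟩ := hx
    exact (hV.inner_iterate n (j' h') h).trans (horth h' _)
  | zero => exact inner_zero_left _
  | add x y _ _ hx hy => rw [inner_add_left, hx, hy, add_zero]
  | smul c x _ hx => rw [inner_smul_left, hx, mul_zero]

variable [CompleteSpace K]

theorem cyclicSubspace_mem_invtSubmodule_adjoint {j : H → K} {A : H → H} {V : K →ₗᵢ[𝕜] K}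
    (hV : AdjointExtends j A V) :
    cyclicSubspace j V ∈
      Module.End.invtSubmodule (adjoint V.toContinuousLinearMap).toLinearMap := by
  refine Submodule.span_le.2 ?_
  rintro _ ⟨n | n, h, rfl⟩
  · have := mem_cyclicSubspace j V 0 (A h)
    rwa [Function.iterate_zero_apply, ← hV.adjoint_apply] at this
  · have adjoint_apply_self (x : K) : adjoint V.toContinuousLinearMap (V x) = x :=
      DFunLike.congr_fun ((norm_map_iff_adjoint_comp_self V.toContinuousLinearMap).1 V.norm_map) x
    have := mem_cyclicSubspace j V n h
    rwa [← adjoint_apply_self (V^[n] (j h)), ← Function.iterate_succ_apply' V] at this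

theorem AdjointExtends.exists_semiconj_self {j₁ j₂ : H → K} {A : H → H} {V : K →ₗᵢ[𝕜] K}
    (h₁ : AdjointExtends j₁ A V) (h₂ : AdjointExtends j₂ A V)
    (horth : ∀ h k, inner 𝕜 (j₁ h - j₂ h) (j₁ k + j₂ k) = 0) :
    ∃ R : K ≃ₗᵢ[𝕜] K, (∀ h, R (j₁ h) = j₂ h) ∧ Function.Semiconj R V V := by
  set N := cyclicSubspace (j₁ - j₂) V
  have neg_sub (h : H) : Nᗮ.reflection (j₁ h - j₂ h) = -(j₁ h - j₂ h) :=
    Nᗮ.reflection_mem_subspace_orthogonalComplement_eq_neg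
      (N.le_orthogonal_orthogonal (mem_cyclicSubspace (j₁ - j₂) V 0 h))
  have fix_add (h : H) : Nᗮ.reflection (j₁ h + j₂ h) = j₁ h + j₂ h :=
    Nᗮ.reflection_mem_subspace_eq_self ((h₁.add h₂).mem_orthogonal_cyclicSubspace horth h)
  refine ⟨Nᗮ.reflection, fun h => ?_, ?_⟩
  · have two_smul_eq : (2 : 𝕜) • Nᗮ.reflection (j₁ h) = (2 : 𝕜) • j₂ h := by
      rw [← map_smul, show (2 : 𝕜) • j₁ h = (j₁ h + j₂ h) + (j₁ h - j₂ h) by module, map_add,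
        fix_add, neg_sub]
      module
    exact smul_right_injective K two_ne_zero two_smul_eq
  · have hN : Nᗮ ∈ Module.End.invtSubmodule (adjoint V.toContinuousLinearMap).toLinearMap :=
      orthogonal_mem_invtSubmodule (T := adjoint V.toContinuousLinearMap) <| by
        rw [adjoint_adjoint]
        exact cyclicSubspace_mem_invtSubmodule _ V
    exact reflection_semiconj Nᗮ V.toLinearMap
      (orthogonal_mem_invtSubmodule (T := V.toContinuousLinearMap)
        (cyclicSubspace_mem_invtSubmodule_adjoint (h₁.sub h₂)))
      (orthogonal_mem_invtSubmodule (T := V.toContinuousLinearMap) hN)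

end CyclicSubspace

section LTwo

open scoped lp

variable {𝕜 ι B Z : Type*} [NormedField 𝕜] [NormedAddCommGroup B] [NormedSpace 𝕜 B]
  [SeminormedAddCommGroup Z] [NormedSpace 𝕜 Z]

theorem lpTwo_hasSum_norm_sq (f : ℓ²(ι, B)) : HasSum (fun i => ‖f i‖ ^ 2) (‖f‖ ^ 2) := by
  simpa using lp.hasSum_norm (p := 2) (by simp) f

/-- The isometry into `ℓ²(ι, B)` whose components are the `g i`. -/
noncomputable def isometryOfHasSum (g : ι → Z →ₗ[𝕜] B)
    (hg : ∀ z, HasSum (fun i => ‖g i z‖ ^ 2) (‖z‖ ^ 2)) : Z →ₗᵢ[𝕜] ℓ²(ι, B) where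
  toFun z := ⟨fun i => g i z, memℓp_gen (by simpa using (hg z).summable)⟩
  map_add' x y := by ext i; exact map_add (g i) x y
  map_smul' c x := by ext i; exact map_smul (g i) c x
  norm_map' z := by
    rw [← sq_eq_sq₀ (norm_nonneg _) (norm_nonneg _)]
    exact (lpTwo_hasSum_norm_sq _).unique (hg z)

variable (𝕜) in
/-- The inclusion of `B` as the `i`-th summand of `ℓ²(ι, B)`. -/
noncomputable def singleₗᵢ [DecidableEq ι] (i : ι) : B →ₗᵢ[𝕜] ℓ²(ι, B) where
  toLinearMap := lp.lsingle (E := fun _ => B) 2 i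
  norm_map' := lp.norm_single (E := fun _ => B) two_pos i

theorem singleₗᵢ_apply [DecidableEq ι] (i : ι) (b : B) (k : ι) :
    singleₗᵢ 𝕜 i b k = (Pi.single i b : ι → B) k := rfl

/-- The diagonal isometry of `ℓ²(ι, B)` with entries `S i`. -/
noncomputable def diag (S : ι → B →ₗᵢ[𝕜] B) : ℓ²(ι, B) →ₗᵢ[𝕜] ℓ²(ι, B) :=
  isometryOfHasSum (fun i => (S i).toLinearMap ∘ₗ lp.evalₗ (fun _ => B) 2 i)
    fun f => by simpa using lpTwo_hasSum_norm_sq f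

@[simp]
theorem diag_apply (S : ι → B →ₗᵢ[𝕜] B) (f : ℓ²(ι, B)) (i : ι) : diag S f i = S i (f i) := rfl

variable (𝕜) in
/-- The permutation of coordinates `f ↦ f ∘ σ` of `ℓ²(ι, B)`. -/
noncomputable def reindex (σ : Equiv.Perm ι) : ℓ²(ι, B) ≃ₗᵢ[𝕜] ℓ²(ι, B) :=
  let permute (τ : Equiv.Perm ι) : ℓ²(ι, B) →ₗᵢ[𝕜] ℓ²(ι, B) :=
    isometryOfHasSum (fun i => lp.evalₗ (fun _ => B) 2 (τ i))
      fun f => τ.hasSum_iff.2 (lpTwo_hasSum_norm_sq f)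
  .ofSurjective (permute σ) fun f =>
    ⟨permute σ.symm f, lp.ext <| funext fun i => congrArg f (σ.symm_apply_apply i)⟩

@[simp]
theorem reindex_apply (σ : Equiv.Perm ι) (f : ℓ²(ι, B)) (i : ι) :
    reindex 𝕜 σ f i = f (σ i) := rfl

theorem reindex_singleₗᵢ [DecidableEq ι] (σ : Equiv.Perm ι) (i : ι) (b : B) :
    reindex 𝕜 σ (singleₗᵢ 𝕜 (σ i) b) = singleₗᵢ 𝕜 i b := by
  ext k
  simp only [reindex_apply, singleₗᵢ_apply, Pi.single_apply, σ.injective.eq_iff]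

end LTwo

section UnitaryEquivalence

variable {𝕜 H K : Type*} [RCLike 𝕜] [NormedAddCommGroup K] [InnerProductSpace 𝕜 K]

theorem adjointExtends_id {j : H → K} {θ : K ≃ₗᵢ[𝕜] K} (hθ : ∀ h, θ (j h) = j h) :
    AdjointExtends j id θ.toLinearIsometry := fun x h =>
  (congrArg (inner 𝕜 (θ x)) (hθ h).symm).trans (θ.inner_map_map x (j h))

/-- `Y` is the conjugate of `X` by a unitary fixing the range of `j` pointwise. -/
def UnitarilyEquivalentOver (j : H → K) (X Y : K →ₗᵢ[𝕜] K) : Prop :=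
  ∃ θ : K ≃ₗᵢ[𝕜] K, (∀ h, θ (j h) = j h) ∧ Function.Semiconj θ X Y

namespace UnitarilyEquivalentOver

variable {j : H → K} {X Y Z : K →ₗᵢ[𝕜] K}

theorem refl (j : H → K) (X : K →ₗᵢ[𝕜] K) : UnitarilyEquivalentOver j X X :=
  ⟨.refl 𝕜 K, fun _ => rfl, fun _ => rfl⟩

theorem symm : UnitarilyEquivalentOver j X Y → UnitarilyEquivalentOver j Y X :=
  fun ⟨θ, hθ, hXY⟩ => ⟨θ.symm, fun h => θ.symm_apply_eq.2 (hθ h).symm,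
    hXY.inverse_left θ.symm_apply_apply θ.apply_symm_apply⟩

theorem trans : UnitarilyEquivalentOver j X Y → UnitarilyEquivalentOver j Y Z →
    UnitarilyEquivalentOver j X Z :=
  fun ⟨θ, hθ, hXY⟩ ⟨η, hη, hYZ⟩ => ⟨θ.trans η, fun h => (congrArg η (hθ h)).trans (hη h),
    hXY.trans hYZ⟩

theorem adjointExtends {A : H → H} :
    UnitarilyEquivalentOver j X Y → AdjointExtends j A X → AdjointExtends j A Y := by
  rintro ⟨θ, hθ, hXY⟩ hX y h
  obtain ⟨x, rfl⟩ := θ.surjective y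
  rw [← hXY, ← hθ h, ← hθ (A h), θ.inner_map_map, θ.inner_map_map, hX]

theorem exists_commute (hXY : UnitarilyEquivalentOver j X Y) (hYZ : Function.Commute Y Z) :
    ∃ W : K →ₗᵢ[𝕜] K, UnitarilyEquivalentOver j W Z ∧ Function.Commute X W := by
  obtain ⟨θ, hθ, hXY⟩ := hXY
  refine ⟨θ.symm.toLinearIsometry.comp (Z.comp θ.toLinearIsometry),
    ⟨θ, hθ, fun x => θ.apply_symm_apply _⟩, fun x => θ.injective ?_⟩
  rw [hXY]
  simpa [hXY x] using hYZ (θ x)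

end UnitarilyEquivalentOver

theorem AdjointExtends.exists_commute_of_unitarilyEquivalentOver {j : H → K} {A₁ A₂ : H → H}
    {D₁ D₂ : K →ₗᵢ[𝕜] K} (h₁ : AdjointExtends j A₁ D₁) (h₂ : AdjointExtends j A₂ D₂)
    (h : UnitarilyEquivalentOver j (D₁.comp D₂) (D₂.comp D₁)) :
    ∃ W₁ W₂ : K →ₗᵢ[𝕜] K,
      AdjointExtends j A₁ W₁ ∧ AdjointExtends j A₂ W₂ ∧ Function.Commute W₁ W₂ := by
  obtain ⟨θ, hθ, hD⟩ := h
  refine ⟨θ.toLinearIsometry.comp D₁, D₂.comp θ.symm.toLinearIsometry,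
    (adjointExtends_id hθ).comp h₁,
    h₂.comp (adjointExtends_id fun h => θ.symm_apply_eq.2 (hθ h).symm), fun x => ?_⟩
  simpa using hD (θ.symm x)

end UnitaryEquivalence

section Diagonal

open scoped lp

variable {𝕜 ι H B : Type*} [RCLike 𝕜] [NormedAddCommGroup B] [InnerProductSpace 𝕜 B] {e : H → B}

theorem inner_singleₗᵢ_right [DecidableEq ι] (f : ℓ²(ι, B)) (i : ι) (b : B) :
    inner 𝕜 f (singleₗᵢ 𝕜 i b) = inner 𝕜 (f i) b :=
  lp.inner_single_right (G := fun _ => B) i b f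

theorem AdjointExtends.single_diag [DecidableEq ι] {A : H → H}
    {S : ι → B →ₗᵢ[𝕜] B} {i : ι} (hS : AdjointExtends e A (S i)) :
    AdjointExtends (singleₗᵢ 𝕜 i ∘ e) A (diag S) := fun f h => by
  simp only [Function.comp_apply, inner_singleₗᵢ_right, diag_apply, hS (f i) h]

variable (𝕜 B) in
/-- The direct sum of a distinguished copy of `B`, indexed by `none`, with infinitely many copies
of `B` for every isometry of `B`; the space on which all vertices of the graph act. -/
abbrev Stabilization : Type _ := ℓ²(Option (ℕ × (B →ₗᵢ[𝕜] B)), B)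

/-- The direct sum of `V`, acting on the distinguished summand, with infinitely many copies of every
isometry of `B`. These absorb the difference between `V` and any other isometry. -/
noncomputable def stabilization (V : B →ₗᵢ[𝕜] B) :
    Stabilization 𝕜 B →ₗᵢ[𝕜] Stabilization 𝕜 B :=
  diag fun i => i.elim V Prod.snd

theorem adjointExtends_stabilization [DecidableEq (B →ₗᵢ[𝕜] B)] {A : H → H} {V : B →ₗᵢ[𝕜] B}
    (hV : AdjointExtends e A V) :
    AdjointExtends (singleₗᵢ 𝕜 none ∘ e) A (stabilization V) :=
  AdjointExtends.single_diag (i := none) hV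

theorem stabilization_commute {V V' : B →ₗᵢ[𝕜] B} (h : Function.Commute V V') :
    Function.Commute (stabilization V) (stabilization V') := by
  intro f
  ext (_ | i)
  · exact h (f none)
  · rfl

variable [CompleteSpace B]

theorem unitarilyEquivalentOver_diag_comp_perm [DecidableEq ι] {A : H → H} {S : ι → B →ₗᵢ[𝕜] B}
    {σ : Equiv.Perm ι} {i : ι} (h₁ : AdjointExtends e A (S i))
    (h₂ : AdjointExtends e A (S (σ i))) :
    UnitarilyEquivalentOver (singleₗᵢ 𝕜 i ∘ e) (diag S) (diag (S ∘ σ)) := by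
  obtain ⟨R, hR, hRS⟩ := h₁.single_diag.exists_semiconj_self h₂.single_diag fun h k => by
    simp only [Function.comp_apply, inner_sub_left, inner_add_right, inner_singleₗᵢ_right,
      singleₗᵢ_apply, Pi.single_apply, eq_comm (a := σ i)]
    split_ifs <;> simp
  refine ⟨R.trans (reindex 𝕜 σ), fun h => ?_, fun f => ?_⟩
  · exact (congrArg (reindex 𝕜 σ) (hR h)).trans (reindex_singleₗᵢ σ i (e h))
  · ext k
    exact congrArg (fun g : ℓ²(ι, B) => g (σ k)) (hRS f)

/-- Ando's theorem for operators with coextensions on a common space: `diag (V₁, V₂)` and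
`diag (V₂, V₁)` commute up to exchanging `V₁ V₂` with `V₂ V₁`. -/
theorem AdjointExtends.exists_commute {A₁ A₂ : H → H} (hA : Function.Commute A₁ A₂)
    {V₁ V₂ : B →ₗᵢ[𝕜] B} (h₁ : AdjointExtends e A₁ V₁) (h₂ : AdjointExtends e A₂ V₂) :
    ∃ W₁ W₂ : ℓ²(Bool, B) →ₗᵢ[𝕜] ℓ²(Bool, B),
      AdjointExtends (singleₗᵢ 𝕜 false ∘ e) A₁ W₁ ∧
      AdjointExtends (singleₗᵢ 𝕜 false ∘ e) A₂ W₂ ∧ Function.Commute W₁ W₂ := by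
  let S₁ : Bool → B →ₗᵢ[𝕜] B := fun b => bif b then V₂ else V₁
  let S₂ : Bool → B →ₗᵢ[𝕜] B := fun b => bif b then V₁ else V₂
  have h₂₁ : AdjointExtends e (A₂ ∘ A₁) (V₂.comp V₁) := hA.comp_eq ▸ h₂.comp h₁
  have key := unitarilyEquivalentOver_diag_comp_perm (S := fun b => (S₁ b).comp (S₂ b))
    (σ := Equiv.boolNot) (i := false) (h₁.comp h₂) h₂₁
  refine exists_commute_of_unitarilyEquivalentOver
    (single_diag (S := S₁) h₁) (single_diag (S := S₂) h₂) ?_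
  convert key using 1
  · ext f (_ | _) <;> rfl
  · ext f (_ | _) <;> rfl

theorem exists_perm_elim_eq {α : Type*} (a a' : α) :
    ∃ σ : Equiv.Perm (Option (ℕ × α)), ∀ i, (σ i).elim a Prod.snd = i.elim a' Prod.snd := by
  classical
  let absorb (b : α) : Option (ℕ × α) ≃ ℕ × α :=
    { toFun
        | none => (0, b)
        | some (n, c) => (if c = b then n + 1 else n, c)
      invFun
        | (0, c) => if c = b then none else some (0, c)
        | (n + 1, c) => some (if c = b then n else n + 1, c)
      left_inv := by rintro (_ | ⟨_ | n, c⟩) <;> grind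
      right_inv := by rintro ⟨_ | n, c⟩ <;> grind }
  have snd_absorb (b : α) (i : Option (ℕ × α)) : (absorb b i).2 = i.elim b Prod.snd := by
    cases i <;> rfl
  exact ⟨(absorb a').trans (absorb a).symm, fun i => by simp [← snd_absorb]⟩

theorem unitarilyEquivalentOver_stabilization [DecidableEq (B →ₗᵢ[𝕜] B)] {A : H → H}
    {V V' : B →ₗᵢ[𝕜] B} (h : AdjointExtends e A V) (h' : AdjointExtends e A V') :
    UnitarilyEquivalentOver (singleₗᵢ 𝕜 none ∘ e) (stabilization V) (stabilization V') := by
  obtain ⟨σ, hσ⟩ := exists_perm_elim_eq V V'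
  have := unitarilyEquivalentOver_diag_comp_perm (S := fun i => i.elim V Prod.snd) (i := none)
    (σ := σ) h ((hσ none).symm ▸ h')
  rwa [show (fun i => i.elim V Prod.snd) ∘ σ = _ from funext hσ] at this

end Diagonal

section Forest

variable {V : Type*} {G : SimpleGraph V}

theorem eq_cons_or_eq_cons_of_isAcyclic (hG : G.IsAcyclic) {u v r : V} (h : G.Adj u v)
    {p : G.Walk u r} {q : G.Walk v r} (hp : p.IsPath) (hq : q.IsPath) :
    p = .cons h q ∨ q = .cons h.symm p := by
  by_cases hu : u ∈ q.support
  · right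
    have := hG.path_concat hp.reverse hq.reverse h (by simpa)
    rw [← q.reverse_reverse, this]
    simp
  · left
    have := (hG.subsingleton_path u r).elim ⟨p, hp⟩ ⟨.cons h q, hq.cons hu⟩
    exact congrArg Subtype.val this

/-- The value at the start of a walk obtained by transporting the value `base` of its end along
its edges. Used with `step` turning a choice at a vertex into a compatible one at a neighbour. -/
def walkTransport {C : V → Sort*} (base : ∀ v, C v) (step : ∀ u v, G.Adj u v → C u → C v) :
    {v r : V} → G.Walk v r → C v
  | v, _, .nil => base v
  | _, _, .cons h p => step _ _ h.symm (walkTransport base step p)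

theorem exists_forall_adj_of_isAcyclic (hG : G.IsAcyclic) {C : V → Sort*} [∀ v, Nonempty (C v)]
    (R : ∀ u v, C u → C v → Prop) (symm : ∀ u v c d, R u v c d → R v u d c)
    (extend : ∀ u v, G.Adj u v → ∀ c, ∃ d, R u v c d) :
    ∃ f : ∀ v, C v, ∀ u v, G.Adj u v → R u v (f u) (f v) := by
  choose step step_spec using extend
  let root (v : V) : V := (G.connectedComponentMk v).out
  have exists_path (v : V) : ∃ p : G.Walk v (root v), p.IsPath :=
    SimpleGraph.Reachable.exists_isPath <| SimpleGraph.ConnectedComponent.exact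
      (Quot.out_eq (G.connectedComponentMk v)).symm
  choose path isPath using exists_path
  let transport {v r : V} (p : G.Walk v r) : C v :=
    walkTransport (fun _ => Classical.arbitrary _) step p
  have adj_transport {u v r r' : V} (h : G.Adj u v) (hr : r = r') (p : G.Walk u r)
      (q : G.Walk v r') (hp : p.IsPath) (hq : q.IsPath) : R u v (transport p) (transport q) := by
    subst hr
    obtain rfl | rfl := eq_cons_or_eq_cons_of_isAcyclic hG h hp hq
    · exact symm _ _ _ _ (step_spec _ _ h.symm _)
    · exact step_spec _ _ h _
  have root_eq {u v : V} (h : G.Adj u v) : root u = root v :=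
    congrArg Quot.out (SimpleGraph.ConnectedComponent.sound h.reachable)
  exact ⟨fun v => transport (path v), fun u v h =>
    adj_transport h (root_eq h) _ _ (isPath u) (isPath v)⟩

end Forest

section Schaeffer

open scoped lp

variable {𝕜 H : Type*} [RCLike 𝕜] [NormedAddCommGroup H] [InnerProductSpace 𝕜 H]

/-- Schäffer's isometry `(x₀, x₁, …) ↦ (T x₀, D x₀, x₁, …)`, where `D` plays the role of the
defect operator of `T`. -/
noncomputable def schaeffer (T D : H →ₗ[𝕜] H) (hTD : ∀ x, ‖T x‖ ^ 2 + ‖D x‖ ^ 2 = ‖x‖ ^ 2) :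
    ℓ²(ℕ, H) →ₗᵢ[𝕜] ℓ²(ℕ, H) :=
  isometryOfHasSum
    (fun
      | 0 => T ∘ₗ lp.evalₗ (fun _ => H) 2 0
      | 1 => D ∘ₗ lp.evalₗ (fun _ => H) 2 0
      | n + 2 => lp.evalₗ (fun _ => H) 2 (n + 1))
    fun f => by
      have tail_hasSum := (hasSum_nat_add_iff' 1).2 (lpTwo_hasSum_norm_sq f)
      refine (hasSum_nat_add_iff' 2).1 ?_
      simpa [Finset.sum_range_succ, hTD] using tail_hasSum

theorem adjointExtends_schaeffer {T D : H →ₗ[𝕜] H} {A : H → H}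
    (hTD : ∀ x, ‖T x‖ ^ 2 + ‖D x‖ ^ 2 = ‖x‖ ^ 2)
    (hTA : ∀ x h, inner 𝕜 (T x) h = inner 𝕜 x (A h)) :
    AdjointExtends (singleₗᵢ 𝕜 0) A (schaeffer T D hTD) := fun f h => by
  rw [inner_singleₗᵢ_right, inner_singleₗᵢ_right]
  exact hTA (f 0) h

end Schaeffer

section Contraction

open scoped lp

variable {H : Type*} [NormedAddCommGroup H] [InnerProductSpace ℂ H] [CompleteSpace H]

theorem exists_norm_sq_add_norm_sq_eq {T : H →L[ℂ] H} (hT : ‖T‖ ≤ 1) :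
    ∃ D : H →L[ℂ] H, ∀ x, ‖T x‖ ^ 2 + ‖D x‖ ^ 2 = ‖x‖ ^ 2 := by
  have nonneg : 0 ≤ 1 - star T * T := sub_nonneg.2 <|
    (CStarAlgebra.norm_le_one_iff_of_nonneg _ (star_mul_self_nonneg T)).1 <| by
      rw [CStarRing.norm_star_mul_self]
      exact mul_le_one₀ hT (norm_nonneg _) hT
  let D : H →L[ℂ] H := CFC.sqrt (1 - star T * T)
  have D_sq : star D * D = 1 - star T * T := by
    rw [(CFC.sqrt_nonneg _).isSelfAdjoint.star_eq, CFC.sqrt_mul_sqrt_self _ nonneg]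
  refine ⟨D, fun x => ?_⟩
  have key : star T * T + star D * D = 1 := by rw [D_sq]; abel
  calc ‖T x‖ ^ 2 + ‖D x‖ ^ 2 = RCLike.re (inner ℂ ((star T * T + star D * D) x) x) := by
        simp only [add_apply, inner_add_left, map_add]
        exact congrArg₂ _ (T.apply_norm_sq_eq_inner_adjoint_left x)
          (D.apply_norm_sq_eq_inner_adjoint_left x)
    _ = ‖x‖ ^ 2 := by rw [key]; exact inner_self_eq_norm_sq x

theorem exists_adjointExtends_of_norm_le_one {A : H →L[ℂ] H} (hA : ‖A‖ ≤ 1) :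
    ∃ V : ℓ²(ℕ, H) →ₗᵢ[ℂ] ℓ²(ℕ, H), AdjointExtends (singleₗᵢ ℂ 0) A V := by
  obtain ⟨D, hD⟩ := exists_norm_sq_add_norm_sq_eq (T := adjoint A) <| by
    rwa [LinearIsometryEquiv.norm_map]
  exact ⟨_, adjointExtends_schaeffer (T := (adjoint A).toLinearMap) (D := D.toLinearMap) hD
    fun x h => adjoint_inner_left A h x⟩

end Contraction

section Graph

open scoped lp

variable {𝕜 W H B : Type*} [RCLike 𝕜] [NormedAddCommGroup B] [InnerProductSpace 𝕜 B]
  [CompleteSpace B]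

theorem exists_adjointExtends_commute_of_isAcyclic {G : SimpleGraph W}
    (hG : G.IsAcyclic) {e : H → B} {A : W → H → H}
    (vertex : ∀ v, ∃ V : B →ₗᵢ[𝕜] B, AdjointExtends e (A v) V)
    (edge : ∀ u v, G.Adj u v → ∃ V V' : B →ₗᵢ[𝕜] B,
      AdjointExtends e (A u) V ∧ AdjointExtends e (A v) V' ∧ Function.Commute V V') :
    ∃ (j : B →ₗᵢ[𝕜] Stabilization 𝕜 B) (X : W → Stabilization 𝕜 B →ₗᵢ[𝕜] Stabilization 𝕜 B),
      (∀ v, AdjointExtends (j ∘ e) (A v) (X v)) ∧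
      ∀ u v, G.Adj u v → Function.Commute (X u) (X v) := by
  classical
  let C (v : W) := {X // ∃ V : B →ₗᵢ[𝕜] B, AdjointExtends e (A v) V ∧
    UnitarilyEquivalentOver (singleₗᵢ 𝕜 none ∘ e) X (stabilization V)}
  have nonempty (v : W) : Nonempty (C v) :=
    let ⟨V, hV⟩ := vertex v
    ⟨⟨stabilization V, V, hV, .refl _ _⟩⟩
  obtain ⟨X, hX⟩ := exists_forall_adj_of_isAcyclic (C := C) hG
    (fun _ _ X Y => Function.Commute X.1 Y.1) (fun _ _ _ _ h => h.symm) <| by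
    rintro u v huv ⟨X, V₀, hV₀, hX⟩
    obtain ⟨V, V', hV, hV', hVV'⟩ := edge u v huv
    obtain ⟨Y, hY, hXY⟩ :=
      (hX.trans (unitarilyEquivalentOver_stabilization hV₀ hV)).exists_commute
        (stabilization_commute hVV')
    exact ⟨⟨Y, V', hV', hY⟩, hXY⟩
  refine ⟨singleₗᵢ 𝕜 none, fun v => (X v).1, fun v => ?_, hX⟩
  obtain ⟨V, hV, hX⟩ := (X v).2
  exact hX.symm.adjointExtends (adjointExtends_stabilization hV)

end Graph

/-- The co-isometric extensions `X v` obtained as adjoints of commuting isometries `O v`. -/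
noncomputable def GraphCoisometricExtension.ofAdjointExtends {V H K : Type}
    [NormedAddCommGroup H] [InnerProductSpace ℂ H] [CompleteSpace H]
    [NormedAddCommGroup K] [InnerProductSpace ℂ K] [CompleteSpace K]
    {G : SimpleGraph V} {A : V → H →L[ℂ] H} (emb : H →ₗᵢ[ℂ] K) {O : V → K →ₗᵢ[ℂ] K}
    (extend : ∀ v, AdjointExtends emb (A v) (O v))
    (commute : ∀ u v, G.Adj u v → Function.Commute (O u) (O v)) :
    GraphCoisometricExtension G A where
  K := K
  emb := emb
  X v := adjoint (O v).toContinuousLinearMap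
  coisometry v := by
    rw [adjoint_adjoint]
    exact (norm_map_iff_adjoint_comp_self _).1 (O v).norm_map
  commute u v huv := by
    rw [← adjoint_comp, ← adjoint_comp]
    exact congrArg adjoint (ContinuousLinearMap.ext fun x => commute v u huv.symm x)
  extend v x := (extend v).adjoint_apply x

/-- Infinite version of Lemma 2.2: if `G` is a (possibly infinite) acyclic graph on a
vertex set `V` and `{A_v}_{v ∈ V}` are contractions on `H` commuting according to `G`,
then there exist a Hilbert space `K ⊇ H` and co-isometries `{X_v}` on `K` commuting
according to `G` with `X_v` extending `A_v` for each `v`. -/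
theorem acyclic_coisometric_extension_infinite {V : Type} {H : Type}
    [NormedAddCommGroup H] [InnerProductSpace ℂ H] [CompleteSpace H]
    (G : SimpleGraph V) (hG : G.IsAcyclic)
    (A : V → H →L[ℂ] H) (hA : ∀ v, ‖A v‖ ≤ 1)
    (hcomm : ∀ u v, G.Adj u v → A u ∘L A v = A v ∘L A u) :
    Nonempty (GraphCoisometricExtension G A) := by
  choose S hS using fun v => exists_adjointExtends_of_norm_le_one (hA v)
  have vertex (v : V) : ∃ W, AdjointExtends (singleₗᵢ ℂ false ∘ singleₗᵢ ℂ 0) (A v) W :=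
    ⟨_, AdjointExtends.single_diag (S := fun _ => S v) (hS v)⟩
  have commute (u v : V) (huv : G.Adj u v) : Function.Commute (A u) (A v) :=
    DFunLike.congr_fun (hcomm u v huv)
  have edge (u v : V) (huv : G.Adj u v) := (hS u).exists_commute (commute u v huv) (hS v)
  obtain ⟨j, O, hO, hO_comm⟩ := exists_adjointExtends_commute_of_isAcyclic hG vertex edge
  exact ⟨.ofAdjointExtends (j.comp ((singleₗᵢ ℂ false).comp (singleₗᵢ ℂ 0))) hO hO_comm⟩
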